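/- Let n ≥ 2 and let T_D, T_E, E_0, B_D, −L, G be the Dirichlet MAC matrices. Then the commutator-difference matrix satisfies (−L − G·Gᵀ)·G = 2 · [E_0 ⊗ B_Dᵀ ; B_Dᵀ ⊗ E_0], the 2n(n−1)×n² matrix obtained by stacking E_0 ⊗ B_Dᵀ on top of B_Dᵀ ⊗ E_0; in particular (−L)·G − G·(Gᵀ·G) vanishes except for entries associated with grid cells adjacent to the boundary. -/

import Mathlib

/-! The one-dimensional difference matrix `B = B_D` satisfies `Bᵀ B = T_D` and
`B Bᵀ = T_E - 2 E₀` (`BD_transpose_mul_BD`, `BD_mul_BD_transpose`): the Dirichlet Laplacian on edges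
is an exact product, while on cells the reflected boundary values add `2` in the two corners. Since
`Gᵀ G = I ⊗ B Bᵀ + B Bᵀ ⊗ I`, the mixed-product rule gives for the top block of `(-L) G - G (Gᵀ G)`
`I ⊗ T_D Bᵀ + T_E ⊗ Bᵀ - I ⊗ Bᵀ B Bᵀ - B Bᵀ ⊗ Bᵀ = (T_E - B Bᵀ) ⊗ Bᵀ = 2 E₀ ⊗ Bᵀ`,
and symmetrically for the bottom block. -/

open Matrix Kronecker

/-- `(n-1)×(n-1)` tridiagonal matrix with `2` on the diagonal and `-1` on the sub/super-diagonal. -/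
noncomputable def TD (n : ℕ) : Matrix (Fin (n - 1)) (Fin (n - 1)) ℝ := fun i j =>
  if i = j then 2 else if (i : ℕ) + 1 = (j : ℕ) ∨ (j : ℕ) + 1 = (i : ℕ) then -1 else 0

/-- `n×n` tridiagonal matrix with diagonal `(3,2,…,2,3)` and `-1` on the sub/super-diagonal. -/
noncomputable def TE (n : ℕ) : Matrix (Fin n) (Fin n) ℝ := fun i j =>
  if i = j then (if (i : ℕ) = 0 ∨ (i : ℕ) = n - 1 then 3 else 2)
  else if (i : ℕ) + 1 = (j : ℕ) ∨ (j : ℕ) + 1 = (i : ℕ) then -1 else 0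

/-- `n×n` diagonal matrix `diag(1,0,…,0,1)`. -/
noncomputable def E0 (n : ℕ) : Matrix (Fin n) (Fin n) ℝ := fun i j =>
  if i = j ∧ ((i : ℕ) = 0 ∨ (i : ℕ) = n - 1) then 1 else 0

/-- `n×(n-1)` bidiagonal matrix with `(B_D)_{i,i} = -1`, `(B_D)_{i+1,i} = 1`. -/
noncomputable def BD (n : ℕ) : Matrix (Fin n) (Fin (n - 1)) ℝ := fun i j =>
  if (i : ℕ) = (j : ℕ) then -1 else if (i : ℕ) = (j : ℕ) + 1 then 1 else 0

/-- Discrete negative vector Laplacian of the Dirichlet MAC discretization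
(`h = 1`, `μ = 1`). -/
noncomputable def negL (n : ℕ) :
    Matrix ((Fin n × Fin (n - 1)) ⊕ (Fin (n - 1) × Fin n))
      ((Fin n × Fin (n - 1)) ⊕ (Fin (n - 1) × Fin n)) ℝ :=
  Matrix.fromBlocks
    ((1 : Matrix (Fin n) (Fin n) ℝ) ⊗ₖ TD n + TE n ⊗ₖ (1 : Matrix (Fin (n - 1)) (Fin (n - 1)) ℝ))
    0 0
    ((1 : Matrix (Fin (n - 1)) (Fin (n - 1)) ℝ) ⊗ₖ TE n + TD n ⊗ₖ (1 : Matrix (Fin n) (Fin n) ℝ))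

/-- Discrete gradient of the Dirichlet MAC discretization: `I_n ⊗ B_Dᵀ` stacked on top of
`B_Dᵀ ⊗ I_n`. -/
noncomputable def Gmac (n : ℕ) :
    Matrix ((Fin n × Fin (n - 1)) ⊕ (Fin (n - 1) × Fin n)) (Fin n × Fin n) ℝ :=
  Matrix.fromRows ((1 : Matrix (Fin n) (Fin n) ℝ) ⊗ₖ (BD n)ᵀ)
    ((BD n)ᵀ ⊗ₖ (1 : Matrix (Fin n) (Fin n) ℝ))

lemma BD_transpose_mul_BD (n : ℕ) : (BD n)ᵀ * BD n = TD n := by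
  ext a b
  have ha : (a : ℕ) + 1 < n := by omega
  have hb : (b : ℕ) + 1 < n := by omega
  -- Column `a` of `B_D` is the difference of two coordinate vectors.
  have h : ∀ i : Fin n, BD n i a =
      (if i = ⟨a + 1, ha⟩ then 1 else 0) - (if i = ⟨a, by omega⟩ then 1 else 0) := by
    intro i
    simp only [BD, Fin.ext_iff]
    split_ifs <;> first | omega | norm_num
  simp only [Matrix.mul_apply, Matrix.transpose_apply, h, sub_mul, ite_mul, one_mul, zero_mul,
    Finset.sum_sub_distrib, Finset.sum_ite_eq', Finset.mem_univ, if_true]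
  simp only [BD, TD, Fin.ext_iff]
  split_ifs <;> first | omega | norm_num

/-- On cells the product `B_D B_Dᵀ` is the Neumann second-difference matrix, whose corner entries
are `1` where those of `T_E` are `3`. -/
lemma BD_mul_BD_transpose (n : ℕ) (hn : 2 ≤ n) :
    BD n * (BD n)ᵀ = TE n - (2 : ℝ) • E0 n := by
  ext i k
  -- Row `i` of `B_D` is a difference of two coordinate vectors, each of which is absent when its
  -- index leaves `{0, …, n - 2}`; summing over naturals avoids casting the indices `i - 1` and `i`.
  have h : ∀ j : ℕ, (if (i : ℕ) = j then (-1 : ℝ) else if (i : ℕ) = j + 1 then 1 else 0) =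
      (if j = (i : ℕ) - 1 then (if (i : ℕ) = 0 then 0 else 1) else 0)
        - (if j = (i : ℕ) then 1 else 0) := by
    intro j
    split_ifs <;> first | omega | norm_num
  simp only [Matrix.mul_apply, Matrix.transpose_apply, BD]
  rw [Fin.sum_univ_eq_sum_range (fun j : ℕ =>
    (if (i : ℕ) = j then (-1 : ℝ) else if (i : ℕ) = j + 1 then 1 else 0) *
    (if (k : ℕ) = j then (-1 : ℝ) else if (k : ℕ) = j + 1 then 1 else 0)) (n - 1)]
  simp only [h, sub_mul, ite_mul, one_mul, zero_mul, Finset.sum_sub_distrib, Finset.sum_ite_eq',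
    Finset.mem_range]
  simp only [TE, E0, Matrix.sub_apply, Matrix.smul_apply, smul_eq_mul, Fin.ext_iff]
  have hi := i.isLt
  have hk := k.isLt
  split_ifs <;> first | omega | norm_num

/-- the commutator-difference matrix of the Dirichlet MAC discretization
satisfies `(-L - G Gᵀ) G = 2 [E₀ ⊗ B_Dᵀ ; B_Dᵀ ⊗ E₀]`; equivalently
`(-L) G - G (Gᵀ G)` equals this matrix, which is supported only on entries associated with
grid cells adjacent to the boundary. -/
theorem stmt_11 (n : ℕ) (hn : 2 ≤ n) :
    (negL n - Gmac n * (Gmac n)ᵀ) * Gmac n =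
      (2 : ℝ) • Matrix.fromRows (E0 n ⊗ₖ (BD n)ᵀ) ((BD n)ᵀ ⊗ₖ E0 n) ∧
    negL n * Gmac n - Gmac n * ((Gmac n)ᵀ * Gmac n) =
      (2 : ℝ) • Matrix.fromRows (E0 n ⊗ₖ (BD n)ᵀ) ((BD n)ᵀ ⊗ₖ E0 n) := by
  -- By associativity both claims are the same identity.
  rw [Matrix.sub_mul, Matrix.mul_assoc, and_self]
  have hTE : TE n = BD n * (BD n)ᵀ + (2 : ℝ) • E0 n := by
    rw [BD_mul_BD_transpose n hn, sub_add_cancel]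
  simp only [negL, Gmac, Matrix.transpose_fromRows, Matrix.fromCols_mul_fromRows,
    Matrix.fromBlocks_mul_fromRows, Matrix.fromRows_mul, Matrix.zero_mul, add_zero, zero_add,
    ← Matrix.kroneckerMap_transpose, Matrix.transpose_transpose, Matrix.transpose_one,
    Matrix.add_mul, Matrix.mul_add, ← Matrix.mul_kronecker_mul, Matrix.one_mul, Matrix.mul_one,
    ← BD_transpose_mul_BD, hTE, Matrix.add_kronecker, Matrix.kronecker_add,
    Matrix.smul_kronecker, Matrix.kronecker_smul, Matrix.smul_mul, Matrix.mul_assoc]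
  ext (p | p) q
  · simp only [Matrix.sub_apply, Matrix.smul_apply, Matrix.fromRows_apply_inl, Matrix.add_apply]
    ring
  · simp only [Matrix.sub_apply, Matrix.smul_apply, Matrix.fromRows_apply_inr, Matrix.add_apply]
    ring
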